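/- arXiv:2106.05200 — 4 statements merged into one kernel-verified Lean document; each statement's English description precedes it below -/
import Mathlib

section
/- Let f: ℝⁿ → ℝⁿ be a smooth diffeomorphism, P ∈ ℝ^{n×n} a permutation matrix, and h(s) = (h_1(s_1), …, h_n(s_n)) an element-wise smooth diffeomorphism of ℝⁿ with nowhere-vanishing derivatives h_i'. Let p be a probability density on ℝⁿ, define f̃ := f ∘ h⁻¹ ∘ P⁻¹ and let p̃ be the pushforward density of p under the map s ↦ P h(s). Then the global IMA contrasts agree: C_IMA(f̃, p̃) = C_IMA(f, p). -/
open Matrix MeasureTheory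

/-- Euclidean norm of the `i`-th column of `W`. -/
noncomputable def colNorm {n : ℕ} (W : Matrix (Fin n) (Fin n) ℝ) (i : Fin n) : ℝ :=
  Real.sqrt (∑ j, (W j i) ^ 2)

/-- Local IMA contrast of a matrix. -/
noncomputable def cIMA {n : ℕ} (W : Matrix (Fin n) (Fin n) ℝ) : ℝ :=
  (∑ i, Real.log (colNorm W i)) - Real.log |W.det|

/-- Jacobian matrix of `f : ℝⁿ → ℝⁿ` at `s`; its `j`-th column is `∂f/∂s_j (s)`. -/
noncomputable def jacobian {n : ℕ} (f : (Fin n → ℝ) → (Fin n → ℝ)) (s : Fin n → ℝ) :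
    Matrix (Fin n) (Fin n) ℝ :=
  Matrix.of fun i j => fderiv ℝ f s (Pi.single j 1) i

/-- Global IMA contrast of `f` with respect to a probability density `p`. -/
noncomputable def CIMA {n : ℕ} (f : (Fin n → ℝ) → (Fin n → ℝ))
    (p : (Fin n → ℝ) → ℝ) : ℝ :=
  ∫ s, cIMA (jacobian f s) * p s

/-!
The pushforward relation turns `C_IMA(f̃, p̃)` into the average over `p` of `c_IMA(f̃, T(s))`, where
`T(s) = P h(s)`. Since `f̃ = f ∘ T⁻¹`, the chain rule gives `J_f̃(T s) = J_f(s) D P⁻¹` with `D`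
diagonal and invertible. Right multiplication by `P⁻¹` permutes the columns, and right
multiplication by `D` rescales the `i`-th column norm by `|D i i|` and `|det|` by `∏ i, |D i i|`, so
neither changes `c_IMA`.
-/

section LocalContrast

variable {n : ℕ} {W : Matrix (Fin n) (Fin n) ℝ}

theorem colNorm_ne_zero_of_det_ne_zero (hW : W.det ≠ 0) (i : Fin n) : colNorm W i ≠ 0 := by
  contrapose! hW
  rw [colNorm, Real.sqrt_eq_zero (by positivity),
    Finset.sum_eq_zero_iff_of_nonneg fun _ _ => sq_nonneg _] at hW
  exact det_eq_zero_of_column_eq_zero i fun j => pow_eq_zero_iff two_ne_zero |>.1 (hW j (by simp))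

theorem colNorm_mul_diagonal (W : Matrix (Fin n) (Fin n) ℝ) (d : Fin n → ℝ) (i : Fin n) :
    colNorm (W * diagonal d) i = colNorm W i * |d i| := by
  simp only [colNorm, mul_diagonal, mul_pow]
  rw [← Finset.sum_mul, Real.sqrt_mul' _ (sq_nonneg _), Real.sqrt_sq_eq_abs]

theorem cIMA_mul_diagonal (hW : W.det ≠ 0) {d : Fin n → ℝ} (hd : ∀ i, d i ≠ 0) :
    cIMA (W * diagonal d) = cIMA W := by
  have log_colNorm (i : Fin n) :
      Real.log (colNorm (W * diagonal d) i) = Real.log (colNorm W i) + Real.log |d i| := by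
    rw [colNorm_mul_diagonal,
      Real.log_mul (colNorm_ne_zero_of_det_ne_zero hW i) (abs_ne_zero.2 (hd i))]
  have log_det :
      Real.log |(W * diagonal d).det| = Real.log |W.det| + ∑ i, Real.log |d i| := by
    rw [det_mul, det_diagonal, abs_mul, Finset.abs_prod,
      Real.log_mul (abs_ne_zero.2 hW) (Finset.prod_ne_zero_iff.2 fun i _ => abs_ne_zero.2 (hd i)),
      Real.log_prod fun i _ => abs_ne_zero.2 (hd i)]
  simp only [cIMA, log_colNorm, log_det, Finset.sum_add_distrib]
  ring

theorem abs_det_permMatrix {ι R : Type*} [Fintype ι] [DecidableEq ι] [CommRing R] [LinearOrder R]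
    [IsStrictOrderedRing R] (σ : Equiv.Perm ι) : |(σ.permMatrix R).det| = 1 := by
  rcases Int.units_eq_one_or σ.sign with hσ | hσ <;> simp [det_permutation, hσ]

theorem cIMA_mul_permMatrix (W : Matrix (Fin n) (Fin n) ℝ) (σ : Equiv.Perm (Fin n)) :
    cIMA (W * σ.permMatrix ℝ) = cIMA W := by
  have colNorm_permuted (i : Fin n) :
      colNorm (W * σ.permMatrix ℝ) i = colNorm W (σ.symm i) := by
    simp only [colNorm, Equiv.Perm.permMatrix, PEquiv.mul_toMatrix_toPEquiv, submatrix_apply, id]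
  simp only [cIMA, colNorm_permuted, det_mul, abs_mul, abs_det_permMatrix, mul_one,
    Equiv.sum_comp σ.symm fun i => Real.log (colNorm W i)]

end LocalContrast

section Jacobian

variable {n : ℕ} {s : Fin n → ℝ}

theorem jacobian_eq_toMatrix' (f : (Fin n → ℝ) → (Fin n → ℝ)) (s : Fin n → ℝ) :
    jacobian f s = LinearMap.toMatrix' (fderiv ℝ f s : (Fin n → ℝ) →ₗ[ℝ] (Fin n → ℝ)) := by
  ext i j
  simp [jacobian, LinearMap.toMatrix'_apply]

theorem det_jacobian (f : (Fin n → ℝ) → (Fin n → ℝ)) (s : Fin n → ℝ) :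
    (jacobian f s).det = (fderiv ℝ f s).det := by
  rw [jacobian_eq_toMatrix', LinearMap.det_toMatrix']

theorem jacobian_comp {g f : (Fin n → ℝ) → (Fin n → ℝ)}
    (hg : DifferentiableAt ℝ g (f s)) (hf : DifferentiableAt ℝ f s) :
    jacobian (g ∘ f) s = jacobian g (f s) * jacobian f s := by
  simp only [jacobian_eq_toMatrix', fderiv_comp s hg hf, ContinuousLinearMap.toLinearMap_comp,
    LinearMap.toMatrix'_comp]

theorem jacobian_id (s : Fin n → ℝ) : jacobian id s = 1 := by
  simp [jacobian_eq_toMatrix']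

theorem det_jacobian_ne_zero_of_leftInverse {f finv : (Fin n → ℝ) → (Fin n → ℝ)}
    (hinv : Function.LeftInverse finv f) (hf : DifferentiableAt ℝ f s)
    (hfinv : DifferentiableAt ℝ finv (f s)) : (jacobian f s).det ≠ 0 := by
  have hmul : jacobian finv (f s) * jacobian f s = 1 := by
    rw [← jacobian_comp hfinv hf, hinv.comp_eq_id, jacobian_id]
  exact det_ne_zero_of_left_inverse hmul

theorem hasFDerivAt_mulVec {𝕜 m n : Type*} [NontriviallyNormedField 𝕜] [CompleteSpace 𝕜]
    [Fintype n] (A : Matrix m n 𝕜) (s : n → 𝕜) :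
    HasFDerivAt A.mulVec A.mulVecLin.toContinuousLinearMap s :=
  A.mulVecLin.toContinuousLinearMap.hasFDerivAt

theorem jacobian_mulVec (A : Matrix (Fin n) (Fin n) ℝ) (s : Fin n → ℝ) :
    jacobian A.mulVec s = A := by
  ext i j
  simp [jacobian, (hasFDerivAt_mulVec A s).fderiv]

theorem hasFDerivAt_piMap {𝕜 ι : Type*} [NontriviallyNormedField 𝕜] [Finite ι] {h : ι → 𝕜 → 𝕜}
    {s : ι → 𝕜} (hh : ∀ i, DifferentiableAt 𝕜 (h i) (s i)) :
    HasFDerivAt (Pi.map h) (ContinuousLinearMap.pi fun i =>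
      deriv (h i) (s i) • ContinuousLinearMap.proj (R := 𝕜) (φ := fun _ : ι => 𝕜) i) s :=
  have := Fintype.ofFinite ι
  hasFDerivAt_pi.2 fun i => (hh i).hasDerivAt.comp_hasFDerivAt s (hasFDerivAt_apply i s)

theorem jacobian_piMap {h : Fin n → ℝ → ℝ} (hh : ∀ i, DifferentiableAt ℝ (h i) (s i)) :
    jacobian (Pi.map h) s = diagonal fun i => deriv (h i) (s i) := by
  ext i j
  simp [jacobian, (hasFDerivAt_piMap hh).fderiv, diagonal_apply, Pi.single_apply]

theorem abs_det_jacobian_permMatrix_comp_piMap (σ : Equiv.Perm (Fin n)) {h : Fin n → ℝ → ℝ}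
    (hh : ∀ i, DifferentiableAt ℝ (h i) (s i)) :
    |(jacobian ((σ.permMatrix ℝ).mulVec ∘ Pi.map h) s).det| = ∏ i, |deriv (h i) (s i)| := by
  rw [jacobian_comp (hasFDerivAt_mulVec _ _).differentiableAt
      (hasFDerivAt_piMap hh).differentiableAt, jacobian_mulVec, jacobian_piMap hh, det_mul,
    abs_mul, abs_det_permMatrix, one_mul, det_diagonal, Finset.abs_prod]

theorem cIMA_jacobian_comp_piMap_comp_permMatrix {f : (Fin n → ℝ) → (Fin n → ℝ)}
    (σ : Equiv.Perm (Fin n)) {u : Fin n → ℝ → ℝ} {y : Fin n → ℝ}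
    (hu : ∀ i, DifferentiableAt ℝ (u i) ((σ.permMatrix ℝ *ᵥ y) i))
    (hu' : ∀ i, deriv (u i) ((σ.permMatrix ℝ *ᵥ y) i) ≠ 0)
    (hf : DifferentiableAt ℝ f (Pi.map u (σ.permMatrix ℝ *ᵥ y)))
    (hdet : (jacobian f (Pi.map u (σ.permMatrix ℝ *ᵥ y))).det ≠ 0) :
    cIMA (jacobian (f ∘ Pi.map u ∘ (σ.permMatrix ℝ).mulVec) y) =
      cIMA (jacobian f (Pi.map u (σ.permMatrix ℝ *ᵥ y))) := by
  have hu_diff := (hasFDerivAt_piMap hu).differentiableAt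
  have hσ_diff := (hasFDerivAt_mulVec (σ.permMatrix ℝ) y).differentiableAt
  have chain_rule : jacobian (f ∘ Pi.map u ∘ (σ.permMatrix ℝ).mulVec) y =
      jacobian f (Pi.map u (σ.permMatrix ℝ *ᵥ y)) *
        diagonal (fun i => deriv (u i) ((σ.permMatrix ℝ *ᵥ y) i)) * σ.permMatrix ℝ := by
    rw [← Function.comp_assoc, jacobian_comp (hf.comp _ hu_diff) hσ_diff,
      jacobian_comp hf hu_diff, jacobian_piMap hu, jacobian_mulVec]
  rw [chain_rule, cIMA_mul_permMatrix, cIMA_mul_diagonal hdet hu']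

end Jacobian

section Inverse

theorem continuous_of_leftInverse_of_rightInverse {α β : Type*}
    [ConditionallyCompleteLinearOrder α] [TopologicalSpace α] [OrderTopology α] [DenselyOrdered α]
    [LinearOrder β] [TopologicalSpace β] [OrderTopology β] {f : α → β} {g : β → α}
    (hf : Continuous f) (hl : Function.LeftInverse g f) (hr : Function.RightInverse g f) :
    Continuous g := by
  rcases hf.strictMono_of_inj hl.injective with hmono | hanti
  · have hg : Monotone g := fun x y hxy => hmono.le_iff_le.1 (by rwa [hr x, hr y])
    exact hg.continuous_of_surjective hl.surjective
  · have hg : Antitone g := fun x y hxy => hanti.le_iff_ge.1 (by rwa [hr x, hr y])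
    exact hg.dual_right.continuous_of_surjective hl.surjective

theorem hasDerivAt_of_leftInverse_of_rightInverse {f g : ℝ → ℝ} (hf : Continuous f)
    (hl : Function.LeftInverse g f) (hr : Function.RightInverse g f) {f' x : ℝ}
    (hf' : HasDerivAt f f' x) (hne : f' ≠ 0) : HasDerivAt g f'⁻¹ (f x) :=
  .of_local_left_inverse (continuous_of_leftInverse_of_rightInverse hf hl hr).continuousAt
    (by rwa [hl x]) hne (.of_forall hr)

theorem leftInverse_mulVec_permMatrix_inv {ι R : Type*} [Fintype ι] [DecidableEq ι] [CommRing R]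
    (σ : Equiv.Perm ι) :
    Function.LeftInverse (σ⁻¹.permMatrix R).mulVec (σ.permMatrix R).mulVec := fun v => by
  rw [mulVec_mulVec, ← permMatrix_mul, mul_inv_cancel, permMatrix_one, one_mulVec]

theorem bijective_mulVec_permMatrix {ι R : Type*} [Fintype ι] [DecidableEq ι] [CommRing R]
    (σ : Equiv.Perm ι) : Function.Bijective (σ.permMatrix R).mulVec :=
  ⟨(leftInverse_mulVec_permMatrix_inv σ).injective, by
    simpa using (leftInverse_mulVec_permMatrix_inv (R := R) σ⁻¹).surjective⟩

theorem cIMA_jacobian_comp_inverse_reparametrisation {n : ℕ} {f : (Fin n → ℝ) → (Fin n → ℝ)}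
    (σ : Equiv.Perm (Fin n)) {h hinv : Fin n → ℝ → ℝ}
    (hh : ∀ i, Differentiable ℝ (h i))
    (hl : ∀ i, Function.LeftInverse (hinv i) (h i))
    (hr : ∀ i, Function.RightInverse (hinv i) (h i)) {s : Fin n → ℝ}
    (hderiv : ∀ i, deriv (h i) (s i) ≠ 0) (hf : DifferentiableAt ℝ f s)
    (hdet : (jacobian f s).det ≠ 0) :
    cIMA (jacobian (f ∘ Pi.map hinv ∘ (σ⁻¹.permMatrix ℝ).mulVec)
      (((σ.permMatrix ℝ).mulVec ∘ Pi.map h) s)) = cIMA (jacobian f s) := by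
  have hinv_deriv (i : Fin n) : HasDerivAt (hinv i) (deriv (h i) (s i))⁻¹ (h i (s i)) :=
    hasDerivAt_of_leftInverse_of_rightInverse (hh i).continuous (hl i) (hr i)
      (hh i (s i)).hasDerivAt (hderiv i)
  have hP : σ⁻¹.permMatrix ℝ *ᵥ (((σ.permMatrix ℝ).mulVec ∘ Pi.map h) s) = Pi.map h s :=
    leftInverse_mulVec_permMatrix_inv σ (Pi.map h s)
  have hs : Pi.map hinv (Pi.map h s) = s := funext fun i => hl i (s i)
  rw [cIMA_jacobian_comp_piMap_comp_permMatrix σ⁻¹] <;> rw [hP]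
  · rw [hs]
  · exact fun i => (hinv_deriv i).differentiableAt
  · exact fun i => by simpa only [Pi.map_apply, (hinv_deriv i).deriv] using inv_ne_zero (hderiv i)
  · rwa [hs]
  · rwa [hs]

end Inverse

theorem integral_smul_eq_of_pushforward_density {E F : Type*} [NormedAddCommGroup E]
    [NormedSpace ℝ E] [FiniteDimensional ℝ E] [MeasurableSpace E] [BorelSpace E]
    [NormedAddCommGroup F] [NormedSpace ℝ F] (μ : Measure E) [μ.IsAddHaarMeasure]
    {T : E → E} (hT : Differentiable ℝ T) (hbij : Function.Bijective T) {p q : E → ℝ}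
    (hpush : ∀ᵐ s ∂μ, q (T s) * |(fderiv ℝ T s).det| = p s) (φ : E → F) :
    ∫ y, q y • φ y ∂μ = ∫ s, p s • φ (T s) ∂μ := by
  have change_of_variables := integral_image_eq_integral_abs_det_fderiv_smul μ MeasurableSet.univ
    (fun s _ => (hT s).hasFDerivAt.hasFDerivWithinAt) hbij.injective.injOn fun y => q y • φ y
  rw [Set.image_univ, hbij.surjective.range_eq, setIntegral_univ, setIntegral_univ]
    at change_of_variables
  rw [change_of_variables]
  refine integral_congr_ae (hpush.mono fun s hs => ?_)
  simp only [← hs, smul_smul, mul_comm]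

theorem CIMA_eq_integral_of_pushforward_density {n : ℕ} {T : (Fin n → ℝ) → (Fin n → ℝ)}
    (hT : Differentiable ℝ T) (hbij : Function.Bijective T) {p q : (Fin n → ℝ) → ℝ}
    (hpush : ∀ᵐ s, q (T s) * |(jacobian T s).det| = p s) (g : (Fin n → ℝ) → (Fin n → ℝ)) :
    CIMA g q = ∫ s, cIMA (jacobian g (T s)) * p s := by
  simp only [det_jacobian] at hpush
  simpa only [CIMA, smul_eq_mul, mul_comm] using
    integral_smul_eq_of_pushforward_density volume hT hbij hpush fun y => cIMA (jacobian g y)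

theorem globalIMA_invariant_under_permutation_and_elementwise_reparametrisation_general
    {n : ℕ} {f : (Fin n → ℝ) → (Fin n → ℝ)} (σ : Equiv.Perm (Fin n)) {h hinv : Fin n → ℝ → ℝ}
    (hh : ∀ i, Differentiable ℝ (h i))
    (hl : ∀ i, Function.LeftInverse (hinv i) (h i))
    (hr : ∀ i, Function.RightInverse (hinv i) (h i))
    {p ptilde : (Fin n → ℝ) → ℝ}
    (hf : ∀ᵐ s, p s ≠ 0 → DifferentiableAt ℝ f s ∧ (jacobian f s).det ≠ 0)
    (hpush : ∀ᵐ s, ptilde (((σ.permMatrix ℝ).mulVec ∘ Pi.map h) s) *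
      |(jacobian ((σ.permMatrix ℝ).mulVec ∘ Pi.map h) s).det| = p s) :
    CIMA (f ∘ Pi.map hinv ∘ (σ⁻¹.permMatrix ℝ).mulVec) ptilde = CIMA f p := by
  have hbij : Function.Bijective ((σ.permMatrix ℝ).mulVec ∘ Pi.map h) :=
    (bijective_mulVec_permMatrix σ).comp <|
      .piMap fun i => ⟨(hl i).injective, (hr i).surjective⟩
  have hT : Differentiable ℝ ((σ.permMatrix ℝ).mulVec ∘ Pi.map h) := fun s =>
    (hasFDerivAt_mulVec _ _).differentiableAt.comp s
      (hasFDerivAt_piMap fun i => hh i (s i)).differentiableAt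
  rw [CIMA_eq_integral_of_pushforward_density hT hbij hpush, CIMA]
  refine integral_congr_ae ?_
  filter_upwards [hf, hpush] with s hfs hps
  rcases eq_or_ne (p s) 0 with hp | hp
  · simp only [hp, mul_zero]
  -- `h` may have critical points, but the pushforward relation forces `p` to vanish there.
  have hderiv (i : Fin n) : deriv (h i) (s i) ≠ 0 := by
    rw [← hps, abs_det_jacobian_permMatrix_comp_piMap σ fun i => hh i (s i)] at hp
    exact abs_ne_zero.1 (Finset.prod_ne_zero_iff.1 (right_ne_zero_of_mul hp) i (Finset.mem_univ i))
  rw [cIMA_jacobian_comp_inverse_reparametrisation σ hh hl hr hderiv (hfs hp).1 (hfs hp).2]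

/-- the global IMA contrast is invariant under reparametrisation of
the sources by a permutation `P` composed with an element-wise smooth
diffeomorphism `h`: with `f̃ = f ∘ h⁻¹ ∘ P⁻¹` and `p̃` the pushforward density of
`p` under `s ↦ P h(s)`, one has `C_IMA(f̃, p̃) = C_IMA(f, p)`. -/
theorem globalIMA_invariant_under_permutation_and_elementwise_reparametrisation
    {n : ℕ}
    (f finv : (Fin n → ℝ) → (Fin n → ℝ))
    (hf : ContDiff ℝ (⊤ : ℕ∞) f) (hfinv : ContDiff ℝ (⊤ : ℕ∞) finv)
    (hfli : Function.LeftInverse finv f) (hfri : Function.RightInverse finv f)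
    (σ : Equiv.Perm (Fin n))
    (h hinv : Fin n → ℝ → ℝ)
    (hhsm : ∀ i, ContDiff ℝ (⊤ : ℕ∞) (h i)) (hhinvsm : ∀ i, ContDiff ℝ (⊤ : ℕ∞) (hinv i))
    (hhli : ∀ i, Function.LeftInverse (hinv i) (h i))
    (hhri : ∀ i, Function.RightInverse (hinv i) (h i))
    (hhderiv : ∀ i x, deriv (h i) x ≠ 0)
    (p ptilde : (Fin n → ℝ) → ℝ)
    (hp0 : ∀ s, 0 ≤ p s) (hp1 : (∫ s, p s) = 1)
    -- `p̃` is the pushforward density of `p` under `T : s ↦ P h(s)`,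
    -- characterised by the change-of-variables relation `p̃(T s)·|det J_T(s)| = p(s)`:
    (hpush : ∀ s : Fin n → ℝ,
      ptilde ((σ.permMatrix ℝ).mulVec fun i => h i (s i)) *
        |(jacobian (fun s => (σ.permMatrix ℝ).mulVec fun i => h i (s i)) s).det|
        = p s) :
    CIMA (fun y => f fun i => hinv i (((σ⁻¹).permMatrix ℝ).mulVec y i)) ptilde
      = CIMA f p := by
  have hfd : Differentiable ℝ f := hf.differentiable (by simp)
  have hdet (s : Fin n → ℝ) : (jacobian f s).det ≠ 0 :=
    det_jacobian_ne_zero_of_leftInverse hfli (hfd s) (hfinv.differentiable (by simp) _)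
  exact globalIMA_invariant_under_permutation_and_elementwise_reparametrisation_general σ
    (fun i => (hhsm i).differentiable (by simp)) hhli hhri
    (.of_forall fun s _ => ⟨hfd s, hdet s⟩) (.of_forall hpush)
end

section
/- Let W ∈ ℝ^{n×n} be an invertible lower triangular matrix. Then the local IMA contrast c(W) := ∑_{i=1}^n log ‖w_i‖ − log |det W| (with w_i the columns of W) satisfies c(W) ≥ 0, and c(W) = 0 if and only if W is diagonal; otherwise c(W) > 0. -/
open Matrix

/-! When `det W` is the product of the diagonal entries, the contrast splits over the columns into
the terms `log ‖wᵢ‖ - log |Wᵢᵢ|`. Each of them is nonnegative, and vanishes exactly when `wᵢ` has no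
entry off the diagonal. -/

section

variable {n : ℕ} (W : Matrix (Fin n) (Fin n) ℝ)

theorem abs_apply_le_colNorm (j i : Fin n) : |W j i| ≤ colNorm W i :=
  Real.abs_le_sqrt <| Finset.single_le_sum (f := fun k => W k i ^ 2)
    (fun _ _ => sq_nonneg _) (Finset.mem_univ j)

theorem colNorm_eq_abs_apply_iff (j i : Fin n) :
    colNorm W i = |W j i| ↔ ∀ k, k ≠ j → W k i = 0 := by
  have sum_nonneg : 0 ≤ ∑ k, W k i ^ 2 := Finset.sum_nonneg fun _ _ => sq_nonneg _
  calc colNorm W i = |W j i|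
    _ ↔ ∑ k, W k i ^ 2 = W j i ^ 2 := by
      rw [colNorm, ← Real.sqrt_sq_eq_abs, Real.sqrt_inj sum_nonneg (sq_nonneg _)]
    _ ↔ ∑ k ∈ Finset.univ.erase j, W k i ^ 2 = 0 := by
      rw [← Finset.add_sum_erase _ _ (Finset.mem_univ j), add_eq_left]
    _ ↔ ∀ k, k ≠ j → W k i = 0 := by
      rw [Finset.sum_eq_zero_iff_of_nonneg fun _ _ => sq_nonneg _]
      simp only [Finset.mem_erase, Finset.mem_univ, and_true, sq_eq_zero_iff]

variable {W}

theorem diag_ne_zero_of_det_eq_prod_diag (hW : W.det ≠ 0) (hdet : W.det = ∏ i, W i i)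
    (i : Fin n) : W i i ≠ 0 :=
  Finset.prod_ne_zero_iff.mp (hdet.symm.trans_ne hW) i (Finset.mem_univ i)

theorem log_abs_diag_le_log_colNorm {i : Fin n} (hi : W i i ≠ 0) :
    Real.log |W i i| ≤ Real.log (colNorm W i) :=
  Real.log_le_log (abs_pos.mpr hi) (abs_apply_le_colNorm W i i)

theorem log_colNorm_eq_log_abs_diag_iff {i : Fin n} (hi : W i i ≠ 0) :
    Real.log (colNorm W i) = Real.log |W i i| ↔ ∀ j, j ≠ i → W j i = 0 := by
  have diag_pos : 0 < |W i i| := abs_pos.mpr hi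
  have colNorm_pos : 0 < colNorm W i := diag_pos.trans_le (abs_apply_le_colNorm W i i)
  rw [Real.log_injOn_pos.eq_iff colNorm_pos diag_pos, colNorm_eq_abs_apply_iff]

theorem cIMA_eq_sum_log_colNorm_sub_log_abs_diag (hW : W.det ≠ 0)
    (hdet : W.det = ∏ i, W i i) :
    cIMA W = ∑ i, (Real.log (colNorm W i) - Real.log |W i i|) := by
  have abs_diag_ne_zero (i : Fin n) : |W i i| ≠ 0 :=
    abs_ne_zero.mpr (diag_ne_zero_of_det_eq_prod_diag hW hdet i)
  rw [cIMA, hdet, Finset.abs_prod, Real.log_prod fun i _ => abs_diag_ne_zero i,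
    Finset.sum_sub_distrib]

theorem cIMA_nonneg_of_det_eq_prod_diag (hW : W.det ≠ 0) (hdet : W.det = ∏ i, W i i) :
    0 ≤ cIMA W := by
  rw [cIMA_eq_sum_log_colNorm_sub_log_abs_diag hW hdet]
  exact Finset.sum_nonneg fun i _ => sub_nonneg.mpr <|
    log_abs_diag_le_log_colNorm (diag_ne_zero_of_det_eq_prod_diag hW hdet i)

theorem cIMA_eq_zero_iff_of_det_eq_prod_diag (hW : W.det ≠ 0) (hdet : W.det = ∏ i, W i i) :
    cIMA W = 0 ↔ ∀ i j : Fin n, i ≠ j → W i j = 0 := by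
  have diag_ne_zero := diag_ne_zero_of_det_eq_prod_diag hW hdet
  calc cIMA W = 0
    _ ↔ ∀ j, Real.log (colNorm W j) = Real.log |W j j| := by
      rw [cIMA_eq_sum_log_colNorm_sub_log_abs_diag hW hdet, Finset.sum_eq_zero_iff_of_nonneg
        fun j _ => sub_nonneg.mpr (log_abs_diag_le_log_colNorm (diag_ne_zero j))]
      simp only [Finset.mem_univ, true_imp_iff, sub_eq_zero]
    _ ↔ ∀ j i, i ≠ j → W i j = 0 :=
      forall_congr' fun j => log_colNorm_eq_log_abs_diag_iff (diag_ne_zero j)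
    _ ↔ ∀ i j, i ≠ j → W i j = 0 := forall_comm

end

theorem localIMA_lowerTriangular_general
    {n : ℕ} (W : Matrix (Fin n) (Fin n) ℝ) (hW : W.det ≠ 0) (hdet : W.det = ∏ i, W i i) :
    0 ≤ cIMA W ∧
      (cIMA W = 0 ↔ ∀ i j : Fin n, i ≠ j → W i j = 0) ∧
      ((¬ ∀ i j : Fin n, i ≠ j → W i j = 0) → 0 < cIMA W) := by
  have nonneg := cIMA_nonneg_of_det_eq_prod_diag hW hdet
  have eq_zero_iff := cIMA_eq_zero_iff_of_det_eq_prod_diag hW hdet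
  exact ⟨nonneg, eq_zero_iff, fun not_diag => nonneg.lt_of_ne' (mt eq_zero_iff.mp not_diag)⟩

/-- for an invertible lower triangular matrix, the local IMA
contrast is nonnegative, vanishes iff the matrix is diagonal, and is strictly
positive otherwise. -/
theorem localIMA_lowerTriangular
    {n : ℕ} (W : Matrix (Fin n) (Fin n) ℝ) (hW : W.det ≠ 0)
    (htri : ∀ i j : Fin n, i < j → W i j = 0) :
    0 ≤ cIMA W ∧
      (cIMA W = 0 ↔ ∀ i j : Fin n, i ≠ j → W i j = 0) ∧
      ((¬ ∀ i j : Fin n, i ≠ j → W i j = 0) → 0 < cIMA W) :=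
  localIMA_lowerTriangular_general W hW <|
    det_of_isLowerTriangular W fun i j hij => htri i j (OrderDual.toDual_lt_toDual.mp hij)
end

section
/- Let f: ℝⁿ → ℝⁿ be a conformal map, i.e., a smooth map whose Jacobian satisfies J_f(s) = λ(s) O(s) for all s, where λ: ℝⁿ → ℝ is a nowhere-vanishing scalar field and O(s) is an orthogonal matrix. Then the local IMA contrast vanishes identically, c_IMA(f,s) = 0 for all s, and hence C_IMA(f,p) = 0 for every probability density p on ℝⁿ. -/
open Matrix MeasureTheory

/-!
The diagonal of the Gram matrix `Wᵀ * W` consists of the squared column norms of `W`. If the columns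
are pairwise orthogonal, the Gram matrix is diagonal, and taking determinants gives equality in
Hadamard's inequality: `|det W|` is the product of the column norms. For invertible `W` one may take
logarithms, which turns this into the vanishing of the local contrast. The Gram matrix of a
conformal Jacobian `λ O` is `λ² • 1`.
-/

section Hadamard

variable {n : ℕ} (W : Matrix (Fin n) (Fin n) ℝ)

lemma colNorm_nonneg (i : Fin n) : 0 ≤ colNorm W i :=
  Real.sqrt_nonneg _

lemma transpose_mul_self_apply_self_eq_colNorm_sq (i : Fin n) : (Wᵀ * W) i i = colNorm W i ^ 2 := by
  rw [colNorm, Real.sq_sqrt (Finset.sum_nonneg fun j _ => sq_nonneg (W j i))]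
  simp only [mul_apply, transpose_apply, sq]

variable {W}

lemma abs_det_eq_prod_colNorm (horth : (Wᵀ * W).IsDiag) : |W.det| = ∏ i, colNorm W i := by
  have hsq : W.det ^ 2 = (∏ i, colNorm W i) ^ 2 := calc
    W.det ^ 2 = (Wᵀ * W).det := by rw [det_mul, det_transpose, sq]
    _ = ∏ i, (Wᵀ * W) i i := (congrArg det horth.diagonal_diag).symm.trans det_diagonal
    _ = (∏ i, colNorm W i) ^ 2 := by
      simp only [transpose_mul_self_apply_self_eq_colNorm_sq, Finset.prod_pow]
  rw [← abs_of_nonneg (Finset.prod_nonneg fun i _ => colNorm_nonneg W i)]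
  exact (sq_eq_sq_iff_abs_eq_abs _ _).mp hsq

theorem cIMA_eq_zero_of_isDiag_transpose_mul_self (horth : (Wᵀ * W).IsDiag) (hdet : W.det ≠ 0) :
    cIMA W = 0 := by
  have hprod : |W.det| = ∏ i, colNorm W i := abs_det_eq_prod_colNorm horth
  have hcol : ∀ i ∈ Finset.univ, colNorm W i ≠ 0 :=
    Finset.prod_ne_zero_iff.mp (hprod ▸ abs_ne_zero.mpr hdet)
  rw [cIMA, hprod, Real.log_prod hcol, sub_self]

end Hadamard

lemma CIMA_eq_zero_of_ae {n : ℕ} {f : (Fin n → ℝ) → (Fin n → ℝ)}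
    (hf : ∀ᵐ s, cIMA (jacobian f s) = 0) (p : (Fin n → ℝ) → ℝ) : CIMA f p = 0 :=
  integral_eq_zero_of_ae <| hf.mono fun s hs => by simp [hs]

section Scaling

variable {m n R : Type*}

lemma isDiag_transpose_mul_self_smul [Fintype m] [CommSemiring R] {A : Matrix m n R}
    (hA : (Aᵀ * A).IsDiag) (c : R) : ((c • A)ᵀ * (c • A)).IsDiag := by
  rw [transpose_smul, Matrix.smul_mul, Matrix.mul_smul]
  exact (hA.smul c).smul c

lemma det_smul_ne_zero [Fintype n] [DecidableEq n] [CommRing R] [NoZeroDivisors R]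
    {A : Matrix n n R} (hA : A.det ≠ 0) {c : R} (hc : c ≠ 0) : (c • A).det ≠ 0 := by
  rw [det_smul]
  exact mul_ne_zero (pow_ne_zero _ hc) hA

end Scaling

theorem conformal_map_has_zero_IMA_contrast_general {n : ℕ} (f : (Fin n → ℝ) → (Fin n → ℝ))
    (horth : ∀ s, ((jacobian f s)ᵀ * jacobian f s).IsDiag) (hdet : ∀ s, (jacobian f s).det ≠ 0) :
    (∀ s, cIMA (jacobian f s) = 0) ∧ ∀ p : (Fin n → ℝ) → ℝ, CIMA f p = 0 :=
  have hlocal (s : Fin n → ℝ) : cIMA (jacobian f s) = 0 :=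
    cIMA_eq_zero_of_isDiag_transpose_mul_self (horth s) (hdet s)
  ⟨hlocal, CIMA_eq_zero_of_ae (.of_forall hlocal)⟩

/-- for a conformal map `f` (Jacobian `J_f(s) = λ(s)·O(s)` with
`λ` nowhere vanishing and `O(s)` orthogonal), the local IMA contrast vanishes
identically, and hence the global IMA contrast vanishes for every probability
density `p`. -/
theorem conformal_map_has_zero_IMA_contrast
    {n : ℕ} (f : (Fin n → ℝ) → (Fin n → ℝ)) (hf : ContDiff ℝ (⊤ : ℕ∞) f)
    (lam : (Fin n → ℝ) → ℝ) (hlam : ∀ s, lam s ≠ 0)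
    (O : (Fin n → ℝ) → Matrix (Fin n) (Fin n) ℝ)
    (hO : ∀ s, (O s)ᵀ * O s = 1)
    (hconf : ∀ s, jacobian f s = lam s • O s) :
    (∀ s, cIMA (jacobian f s) = 0) ∧
    (∀ p : (Fin n → ℝ) → ℝ, (∀ s, 0 ≤ p s) → (∫ s, p s) = 1 → CIMA f p = 0) := by
  obtain ⟨hlocal, hglobal⟩ := conformal_map_has_zero_IMA_contrast_general f
    (fun s => hconf s ▸ isDiag_transpose_mul_self_smul (hO s ▸ isDiag_one) (lam s))
    (fun s => hconf s ▸ det_smul_ne_zero (det_ne_zero_of_left_inverse (hO s)) (hlam s))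
  exact ⟨hlocal, fun p _ _ => hglobal p⟩
end

section
/- Let R ∈ ℝ^{n×n} be an orthogonal matrix and fix indices i ≠ j with R_{1i} · R_{1j} ≠ 0. Let d_1, …, d_n: ℝ → ℝ be strictly positive functions such that d_1 is strictly monotonic on some open neighborhood of a point z₁⁰ ∈ ℝ. Then it is NOT the case that ∑_{k=1}^n d_k(z_k) R_{ki} R_{kj} = 0 for all z = (z_1, …, z_n) ∈ ℝⁿ; i.e., there exists z ∈ ℝⁿ with ∑_{k=1}^n d_k(z_k) R_{ki} R_{kj} ≠ 0. -/
open Matrix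

/-! The sum separates the variables `z_k`: moving `z_1` alone from `x` to `y` changes it by
`(d_1 y - d_1 x) R_{1i} R_{1j}`, so it can vanish identically only if `d_1` is constant, which
strict monotonicity near a point excludes. -/

open scoped Topology

theorem apply_eq_apply_of_forall_sum_apply_eq {ι M : Type*} [Fintype ι] [AddCommMonoid M]
    [IsRightCancelAdd M] {X : ι → Type*} [∀ k, Nonempty (X k)] {f : ∀ k, X k → M} {c : M}
    (hf : ∀ z : ∀ k, X k, ∑ k, f k (z k) = c) (k : ι) (x y : X k) : f k x = f k y := by
  classical
  let a : ∀ l, X l := fun _ ↦ Classical.arbitrary _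
  have split_sum (t : X k) : f k t + ∑ l ∈ Finset.univ \ {k}, f l (a l) = c := by
    rw [← Finset.sum_update_of_mem (Finset.mem_univ k), ← hf (Function.update a k t)]
    simp only [Function.apply_update f]
  exact add_right_cancel ((split_sum x).trans (split_sum y).symm)

theorem exists_apply_ne_apply_of_injOn_of_mem_nhds {X Y : Type*} [TopologicalSpace X] [T1Space X]
    {a : X} [(𝓝[≠] a).NeBot] {U : Set X} {f : X → Y} (hU : U ∈ 𝓝 a) (hf : U.InjOn f) :
    ∃ x y, f x ≠ f y := by
  obtain ⟨x, hx, y, hy, hxy⟩ := (infinite_of_mem_nhds a hU).nontrivial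
  exact ⟨x, y, hf.ne hx hy hxy⟩

theorem weighted_offdiagonal_sum_not_identically_zero_general {ι m S : Type*} [Fintype ι] [Ring S]
    [NoZeroDivisors S] {X : ι → Type*} [∀ k, Nonempty (X k)] (R : Matrix ι m S) {i j : m} {k₀ : ι}
    (hR : R k₀ i * R k₀ j ≠ 0) (d : ∀ k, X k → S) (hd : ∃ x y, d k₀ x ≠ d k₀ y) :
    ∃ z : ∀ k, X k, ∑ k, d k (z k) * R k i * R k j ≠ 0 := by
  obtain ⟨x, y, hxy⟩ := hd
  by_contra! hzero
  have hterm : d k₀ x * R k₀ i * R k₀ j = d k₀ y * R k₀ i * R k₀ j :=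
    apply_eq_apply_of_forall_sum_apply_eq (f := fun k t ↦ d k t * R k i * R k j) hzero k₀ x y
  rw [mul_assoc, mul_assoc] at hterm
  exact hxy (mul_right_cancel₀ hR hterm)

/-- let `R` be orthogonal with `R_{1i}·R_{1j} ≠ 0` for some
`i ≠ j`, and `d_1, …, d_n` strictly positive weight functions with `d_1`
strictly monotonic on an open neighborhood of some point `z₁⁰`. Then
`∑_k d_k(z_k) R_{ki} R_{kj}` cannot vanish for all `z`. -/
theorem weighted_offdiagonal_sum_not_identically_zero
    {n : ℕ} [NeZero n]
    (R : Matrix (Fin n) (Fin n) ℝ) (hR : Rᵀ * R = 1)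
    (i j : Fin n) (hij : i ≠ j)
    (hRij : R 0 i * R 0 j ≠ 0)
    (d : Fin n → ℝ → ℝ) (hd : ∀ k x, 0 < d k x)
    (z₁0 : ℝ) (U : Set ℝ) (hUopen : IsOpen U) (hz : z₁0 ∈ U)
    (hmono : StrictMonoOn (d 0) U ∨ StrictAntiOn (d 0) U) :
    ∃ z : Fin n → ℝ, (∑ k, d k (z k) * R k i * R k j) ≠ 0 :=
  weighted_offdiagonal_sum_not_identically_zero_general R hRij d <|
    exists_apply_ne_apply_of_injOn_of_mem_nhds (hUopen.mem_nhds hz)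
      (hmono.elim StrictMonoOn.injOn StrictAntiOn.injOn)
end
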